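/- arXiv:1907.06681 — 2 statements merged into one kernel-verified Lean document; each statement's English description precedes it below -/
import Mathlib

section
/- For every real number t with t < 1 there exists ε > 0 such that for all real z with |z| < ε the series ∑_{n≥0} Pₙ(t) zⁿ/n! converges and equals √(1−t) / (√(1−t) − tanh(z·√(1−t))). -/
open scoped Classical in
/-- The number of peaks of a permutation of `Fin n` (0-indexed: a peak is an
index `i` with `1 ≤ i ≤ n-2` such that `π (i-1) < π i > π (i+1)`;
this matches the 1-indexed condition `2 ≤ i ≤ n-1` of the paper). -/
noncomputable def numPeaks {n : ℕ} (π : Equiv.Perm (Fin n)) : ℕ :=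
  (Finset.univ.filter fun i : Fin n =>
    ∃ (_ : 1 ≤ (i : ℕ)) (h2 : (i : ℕ) + 1 < n),
      π ⟨(i : ℕ) - 1, Nat.lt_of_le_of_lt (Nat.sub_le _ _) i.isLt⟩ < π i ∧
      π ⟨(i : ℕ) + 1, h2⟩ < π i).card

/-- The peak polynomial `Pₙ(t) = ∑_{π ∈ Sₙ} t^(pk π)`, evaluated at `t : ℝ`. -/
noncomputable def peakPoly (n : ℕ) (t : ℝ) : ℝ :=
  ∑ π : Equiv.Perm (Fin n), t ^ numPeaks π

/-- `fₙ = Pₙ(-1)`. -/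
noncomputable def f (n : ℕ) : ℝ := peakPoly n (-1)

/-!
Every permutation of `n + 1` letters arises uniquely by inserting a new maximum into one of the
`n + 1` gaps of a permutation of `n ≥ 1` letters. If the latter has `k` peaks, the two end gaps and
the `2 * k` gaps adjacent to a peak preserve the number of peaks, and the other `n - 1 - 2 * k`
raise it by one. Hence, if functions `w` and `b` satisfy `w' = 2 * w * b` and `b' = t * w`,
differentiating `∑ t ^ k * w ^ (k + 1) * b ^ (n - 1 - 2 * k)` over the permutations of `n` letters
gives the same expression for `n + 1` letters. With `s = √(1 - t)`, the derivative `w` of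
`s / (s - tanh (z * s))` solves this system together with a suitable `b`, and all three functions
are `1` at `z = 0`, so the derivatives there are the peak polynomials.
-/

section Sequences

variable {α : Type*} [Preorder α] [DecidableLT α] {n p i : ℕ} {m : α} {g : ℕ → α}

/-- The set of peaks of the word `g 0, …, g (n - 1)`. -/
def peakSet (n : ℕ) (g : ℕ → α) : Finset ℕ :=
  {i ∈ Finset.Ioo 0 (n - 1) | g (i - 1) < g i ∧ g (i + 1) < g i}

/-- The word `g` with the letter `m` inserted in front of `g p`. -/
def insertLetter (p : ℕ) (m : α) (g : ℕ → α) (i : ℕ) : α :=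
  if i < p then g i else if i = p then m else g (i - 1)

/-- The gaps adjacent to a peak of `g 0, …, g (n - 1)`, where gap `p` lies in front of `g p`. -/
def peakGaps (n : ℕ) (g : ℕ → α) : Finset ℕ :=
  peakSet n g ∪ (peakSet n g).image (· + 1)

/-- The gaps of `g 0, …, g (n - 1)` in which inserting a maximal letter creates a new peak without
destroying an old one: those that are neither at an end of the word nor adjacent to a peak. -/
def peakRaisingGaps (n : ℕ) (g : ℕ → α) : Finset ℕ :=
  Finset.Ioo 0 n \ peakGaps n g

lemma mem_peakSet :
    i ∈ peakSet n g ↔ 0 < i ∧ i + 1 < n ∧ g (i - 1) < g i ∧ g (i + 1) < g i := by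
  simp only [peakSet, Finset.mem_filter, Finset.mem_Ioo]
  grind

lemma succ_notMem_peakSet (hi : i ∈ peakSet n g) : i + 1 ∉ peakSet n g := fun hi' =>
  lt_asymm (mem_peakSet.1 hi).2.2.2 (mem_peakSet.1 hi').2.2.1

lemma mem_peakGaps :
    p ∈ peakGaps n g ↔ p ∈ peakSet n g ∨ p - 1 ∈ peakSet n g := by
  simp only [peakGaps, Finset.mem_union, Finset.mem_image]
  grind [mem_peakSet]

lemma peakGaps_subset_Ioo : peakGaps n g ⊆ Finset.Ioo 0 n := fun p hp => by
  grind [mem_peakGaps, mem_peakSet]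

lemma card_peakGaps : (peakGaps n g).card = 2 * (peakSet n g).card := by
  have hdisj : Disjoint (peakSet n g) ((peakSet n g).image (· + 1)) :=
    Finset.disjoint_left.2 fun i hi hi' => by
      obtain ⟨j, hj, rfl⟩ := Finset.mem_image.1 hi'
      exact succ_notMem_peakSet hj hi
  rw [peakGaps, Finset.card_union_of_disjoint hdisj,
    Finset.card_image_of_injective _ (add_left_injective 1), two_mul]

lemma card_peakRaisingGaps :
    (peakRaisingGaps n g).card = n - 1 - 2 * (peakSet n g).card := by
  rw [peakRaisingGaps, Finset.card_sdiff_of_subset peakGaps_subset_Ioo, Nat.card_Ioo, card_peakGaps]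
  simp

lemma two_mul_card_peakSet_le : 2 * (peakSet n g).card ≤ n - 1 := by
  simpa [card_peakGaps] using Finset.card_le_card (peakGaps_subset_Ioo (n := n) (g := g))

lemma mem_peakSet_insertLetter (hp : p ≤ n) (hg : ∀ i < n, g i < m) :
    i ∈ peakSet (n + 1) (insertLetter p m g) ↔
      (i + 1 < p ∧ i ∈ peakSet n g) ∨ (i = p ∧ p ∈ Finset.Ioo 0 n) ∨
        (p < i - 1 ∧ i - 1 ∈ peakSet n g) := by
  simp only [mem_peakSet, insertLetter, Finset.mem_Ioo]
  grind [lt_asymm]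

lemma card_filter_not_adjacent_add :
    {i ∈ peakSet n g | i ≠ p ∧ i + 1 ≠ p}.card + (if p ∈ peakGaps n g then 1 else 0) =
      (peakSet n g).card := by
  have hadj : {i ∈ peakSet n g | ¬(i ≠ p ∧ i + 1 ≠ p)}.card =
      if p ∈ peakGaps n g then 1 else 0 := by
    split_ifs with h
    · rcases mem_peakGaps.1 h with h | h
      · exact Finset.card_eq_one.2 ⟨p, by grind [succ_notMem_peakSet]⟩
      · exact Finset.card_eq_one.2 ⟨p - 1, by grind [succ_notMem_peakSet, mem_peakSet]⟩
    · rw [Finset.card_eq_zero, Finset.filter_eq_empty_iff]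
      grind [mem_peakGaps]
  rw [← hadj, Finset.card_filter_add_card_filter_not]

lemma card_peakSet_insertLetter_eq_add (hp : p ≤ n) (hg : ∀ i < n, g i < m) :
    (peakSet (n + 1) (insertLetter p m g)).card =
      {i ∈ peakSet n g | i ≠ p ∧ i + 1 ≠ p}.card + if p ∈ Finset.Ioo 0 n then 1 else 0 := by
  let shift (i : ℕ) : ℕ := if i < p then i else i + 1
  have hshift : Function.Injective shift := fun i j hij => by grind
  have hmem_image (i : ℕ) : i ∈ {i ∈ peakSet n g | i ≠ p ∧ i + 1 ≠ p}.image shift ↔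
      (i + 1 < p ∧ i ∈ peakSet n g) ∨ (p < i - 1 ∧ i - 1 ∈ peakSet n g) := by
    rw [Finset.mem_image]
    constructor
    · grind
    · rintro (hi | hi)
      · exact ⟨i, by grind⟩
      · exact ⟨i - 1, by grind⟩
  rw [← Finset.card_image_of_injective {i ∈ peakSet n g | i ≠ p ∧ i + 1 ≠ p} hshift]
  split_ifs with h
  · rw [← Finset.card_insert_of_notMem (a := p) (by simp only [hmem_image]; lia)]
    congr 1
    ext i
    rw [mem_peakSet_insertLetter hp hg, Finset.mem_insert, hmem_image]
    tauto
  · rw [add_zero]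
    congr 1
    ext i
    rw [mem_peakSet_insertLetter hp hg, hmem_image]
    tauto

lemma card_peakSet_insertLetter (hp : p ≤ n) (hg : ∀ i < n, g i < m) :
    (peakSet (n + 1) (insertLetter p m g)).card =
      (peakSet n g).card + if p ∈ peakRaisingGaps n g then 1 else 0 := by
  have hgap := peakGaps_subset_Ioo (n := n) (g := g)
  rw [card_peakSet_insertLetter_eq_add hp hg, ← card_filter_not_adjacent_add (p := p),
    peakRaisingGaps]
  grind

end Sequences

section Permutations

variable {n : ℕ}

/-- The one-line notation of a permutation of `Fin n` as a word of natural numbers, extended by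
the junk value `0` at positions `i ≥ n`. -/
def permWord (π : Equiv.Perm (Fin n)) (i : ℕ) : ℕ :=
  if h : i < n then π ⟨i, h⟩ else 0

/-- The permutation of `Fin (n + 1)` whose one-line notation is that of `π` with the new maximum
`n` inserted at position `p`. -/
def insertMax (p : Fin (n + 1)) (π : Equiv.Perm (Fin n)) : Equiv.Perm (Fin (n + 1)) :=
  (finSuccEquiv' p).trans ((Equiv.optionCongr π).trans (finSuccEquiv' (Fin.last n)).symm)

lemma permWord_of_lt (π : Equiv.Perm (Fin n)) {i : ℕ} (hi : i < n) :
    permWord π i = π ⟨i, hi⟩ :=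
  dif_pos hi

lemma permWord_lt (π : Equiv.Perm (Fin n)) {i : ℕ} (hi : i < n) : permWord π i < n := by
  simp [permWord_of_lt π hi]

lemma numPeaks_eq_card_peakSet (π : Equiv.Perm (Fin n)) :
    numPeaks π = (peakSet n (permWord π)).card := by
  classical
  rw [numPeaks, ← Finset.card_map Fin.valEmbedding]
  congr 1
  ext i
  simp only [Finset.mem_map, Finset.mem_filter_univ, Fin.valEmbedding_apply, mem_peakSet]
  constructor
  · rintro ⟨j, ⟨hpos, hlt, hleft, hright⟩, rfl⟩
    refine ⟨hpos, hlt, ?_⟩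
    rw [permWord_of_lt π j.isLt, permWord_of_lt π hlt, permWord_of_lt π (by lia)]
    exact ⟨hleft, hright⟩
  · rintro ⟨hpos, hlt, hpeak⟩
    have hi : i < n := by lia
    rw [permWord_of_lt π hi, permWord_of_lt π hlt, permWord_of_lt π (by lia)] at hpeak
    exact ⟨⟨i, hi⟩, ⟨hpos, hlt, hpeak⟩, rfl⟩

lemma two_mul_numPeaks_le (π : Equiv.Perm (Fin n)) : 2 * numPeaks π ≤ n - 1 := by
  rw [numPeaks_eq_card_peakSet]
  exact two_mul_card_peakSet_le

lemma insertMax_apply_self (p : Fin (n + 1)) (π : Equiv.Perm (Fin n)) :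
    insertMax p π p = Fin.last n := by
  simp [insertMax]

lemma insertMax_apply_succAbove (p : Fin (n + 1)) (π : Equiv.Perm (Fin n)) (i : Fin n) :
    insertMax p π (p.succAbove i) = (π i).castSucc := by
  simp [insertMax]

lemma insertMax_bijective :
    Function.Bijective fun x : Equiv.Perm (Fin n) × Fin (n + 1) => insertMax x.2 x.1 := by
  refine (Fintype.bijective_iff_injective_and_card _).2 ⟨?_, ?_⟩
  · rintro ⟨π, p⟩ ⟨π', p'⟩ (h : insertMax p π = insertMax p' π')
    obtain rfl : p = p' := (insertMax p' π').injective <| by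
      rw [insertMax_apply_self, ← h, insertMax_apply_self]
    obtain rfl : π = π' := Equiv.ext fun i => Fin.castSucc_injective n <| by
      rw [← insertMax_apply_succAbove p π, h, insertMax_apply_succAbove]
    rfl
  · simp [Fintype.card_perm, Nat.factorial_succ, mul_comm]

lemma permWord_insertMax (p : Fin (n + 1)) (π : Equiv.Perm (Fin n)) {i : ℕ} (hi : i < n + 1) :
    permWord (insertMax p π) i = insertLetter p n (permWord π) i := by
  rw [permWord_of_lt _ hi]
  obtain h | ⟨j, h⟩ := Fin.eq_self_or_eq_succAbove p ⟨i, hi⟩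
  · obtain rfl : i = p := congrArg Fin.val h
    simp [h, insertMax_apply_self, insertLetter]
  · rw [h, insertMax_apply_succAbove, Fin.val_castSucc]
    have hval : i = if (j : ℕ) < p then (j : ℕ) else j + 1 := by
      simpa [Fin.succAbove, Fin.lt_def, apply_ite] using congrArg Fin.val h
    have hj := permWord_of_lt π j.isLt
    grind [insertLetter]

lemma peakSet_permWord_insertMax (p : Fin (n + 1)) (π : Equiv.Perm (Fin n)) :
    peakSet (n + 1) (permWord (insertMax p π)) =
      peakSet (n + 1) (insertLetter p n (permWord π)) := by
  grind [mem_peakSet, permWord_insertMax]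

lemma numPeaks_insertMax (p : Fin (n + 1)) (π : Equiv.Perm (Fin n)) :
    numPeaks (insertMax p π) =
      numPeaks π + if (p : ℕ) ∈ peakRaisingGaps n (permWord π) then 1 else 0 := by
  rw [numPeaks_eq_card_peakSet, numPeaks_eq_card_peakSet, peakSet_permWord_insertMax,
    card_peakSet_insertLetter (Fin.is_le p) fun _ => permWord_lt π]

lemma sum_numPeaks_insertMax {M : Type*} [AddCommMonoid M] (h : ℕ → M)
    (π : Equiv.Perm (Fin (n + 1))) :
    ∑ p, h (numPeaks (insertMax p π)) =
      (2 * numPeaks π + 2) • h (numPeaks π) + (n - 2 * numPeaks π) • h (numPeaks π + 1) := by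
  set R := peakRaisingGaps (n + 1) (permWord π) with hR
  have hcard : R.card = n - 2 * numPeaks π := by
    rw [hR, card_peakRaisingGaps, numPeaks_eq_card_peakSet, Nat.add_sub_cancel]
  have hsub : R ⊆ Finset.range (n + 2) := fun i hi => by grind [peakRaisingGaps]
  have hcompl : (Finset.range (n + 2) \ R).card = 2 * numPeaks π + 2 := by
    have hle := two_mul_numPeaks_le π
    rw [Finset.card_sdiff_of_subset hsub, hcard, Finset.card_range]
    lia
  calc ∑ p, h (numPeaks (insertMax p π))
      = ∑ p ∈ Finset.range (n + 2), h (numPeaks π + if p ∈ R then 1 else 0) := by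
        simp only [numPeaks_insertMax]
        exact Fin.sum_univ_eq_sum_range (fun p => h (numPeaks π + if p ∈ R then 1 else 0)) (n + 2)
    _ = ∑ _p ∈ Finset.range (n + 2) \ R, h (numPeaks π) + ∑ _p ∈ R, h (numPeaks π + 1) := by
        rw [← Finset.sum_sdiff hsub]
        congr 1 <;> exact Finset.sum_congr rfl fun p hp => by grind
    _ = _ := by
        rw [Finset.sum_const, Finset.sum_const, hcard, hcompl]

lemma sum_perm_numPeaks_succ {M : Type*} [AddCommMonoid M] (n : ℕ) (h : ℕ → M) :
    ∑ σ : Equiv.Perm (Fin (n + 2)), h (numPeaks σ) =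
      ∑ π : Equiv.Perm (Fin (n + 1)), ((2 * numPeaks π + 2) • h (numPeaks π) +
        (n - 2 * numPeaks π) • h (numPeaks π + 1)) := by
  rw [← insertMax_bijective.sum_comp, Fintype.sum_prod_type]
  exact Finset.sum_congr rfl fun π _ => sum_numPeaks_insertMax h π

end Permutations

section PeakSum

/-- The peak polynomial of the permutations of `n + 1` letters, refined by weights on the `n + 2`
gaps of a permutation with `k` peaks: the `n - 2 * k` gaps where inserting the new maximum raises
the number of peaks have weight `b`, and the other `2 * (k + 1)` gaps have weight `w` per pair.
The subtraction is exact by `two_mul_numPeaks_le`. -/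
noncomputable def peakSum {R : Type*} [CommSemiring R] (t w b : R) (n : ℕ) : R :=
  ∑ π : Equiv.Perm (Fin (n + 1)),
    t ^ numPeaks π * w ^ (numPeaks π + 1) * b ^ (n - 2 * numPeaks π)

lemma peakSum_zero {R : Type*} [CommSemiring R] (t w b : R) : peakSum t w b 0 = w := by
  have hpeaks (π : Equiv.Perm (Fin (0 + 1))) : numPeaks π = 0 := by
    simpa using two_mul_numPeaks_le π
  simp [peakSum, hpeaks]

lemma peakPoly_zero (t : ℝ) : peakPoly 0 t = 1 := by
  simp [peakPoly, numPeaks]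

lemma peakSum_one_one (t : ℝ) (n : ℕ) : peakSum t 1 1 n = peakPoly (n + 1) t := by
  simp [peakSum, peakPoly]

variable {𝕜 : Type*} [NontriviallyNormedField 𝕜] {t : 𝕜} {F w b : 𝕜 → 𝕜} {x : 𝕜}

lemma hasDerivAt_peakSum (n : ℕ)
    (hw : HasDerivAt w (2 * w x * b x) x) (hb : HasDerivAt b (t * w x) x) :
    HasDerivAt (fun z => peakSum t (w z) (b z) n) (peakSum t (w x) (b x) (n + 1)) x := by
  unfold peakSum
  rw [sum_perm_numPeaks_succ n fun k => t ^ k * w x ^ (k + 1) * b x ^ (n + 1 - 2 * k)]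
  refine HasDerivAt.fun_sum fun π _ => ?_
  obtain ⟨m, hm⟩ := Nat.exists_eq_add_of_le (two_mul_numPeaks_le π)
  rw [Nat.add_sub_cancel] at hm
  generalize numPeaks π = k at hm ⊢
  subst hm
  rw [show 2 * k + m - 2 * k = m by lia, show 2 * k + m + 1 - 2 * k = m + 1 by lia,
    show 2 * k + m + 1 - 2 * (k + 1) = m - 1 by lia]
  refine (((hw.fun_pow (k + 1)).const_mul (t ^ k)).mul (hb.fun_pow m)).congr_deriv ?_
  push_cast [nsmul_eq_mul]
  ring

lemma iteratedDeriv_succ_eventuallyEq_peakSum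
    (hF : ∀ᶠ z in nhds x, HasDerivAt F (w z) z)
    (hw : ∀ᶠ z in nhds x, HasDerivAt w (2 * w z * b z) z)
    (hb : ∀ᶠ z in nhds x, HasDerivAt b (t * w z) z) (n : ℕ) :
    iteratedDeriv (n + 1) F =ᶠ[nhds x] fun z => peakSum t (w z) (b z) n := by
  induction n with
  | zero =>
    filter_upwards [hF] with z hFz
    rw [zero_add, iteratedDeriv_one, hFz.deriv, peakSum_zero]
  | succ n ih =>
    rw [iteratedDeriv_succ]
    filter_upwards [hw, hb, ih.deriv] with z hwz hbz hderiv
    rw [hderiv, (hasDerivAt_peakSum n hwz hbz).deriv]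

lemma iteratedDeriv_eq_peakPoly {t : ℝ} {F w b : ℝ → ℝ} {x : ℝ}
    (hF : ∀ᶠ z in nhds x, HasDerivAt F (w z) z)
    (hw : ∀ᶠ z in nhds x, HasDerivAt w (2 * w z * b z) z)
    (hb : ∀ᶠ z in nhds x, HasDerivAt b (t * w z) z)
    (hFx : F x = 1) (hwx : w x = 1) (hbx : b x = 1) (n : ℕ) :
    iteratedDeriv n F x = peakPoly n t := by
  cases n with
  | zero => rw [iteratedDeriv_zero, hFx, peakPoly_zero]
  | succ n =>
    rw [(iteratedDeriv_succ_eventuallyEq_peakSum hF hw hb n).eq_of_nhds]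
    simp only [hwx, hbx, peakSum_one_one]

end PeakSum

section Analysis

lemma hasSum_iteratedDeriv_of_analyticAt {𝕜 : Type*} [NontriviallyNormedField 𝕜]
    [CompleteSpace 𝕜] [CharZero 𝕜] {F : 𝕜 → 𝕜} {x : 𝕜} (hF : AnalyticAt 𝕜 F x) :
    ∃ ε > 0, ∀ z : 𝕜, ‖z‖ < ε →
      HasSum (fun n : ℕ => iteratedDeriv n F x * z ^ n / n.factorial) (F (x + z)) := by
  obtain ⟨ε, hε, hsum⟩ := Metric.eventually_nhds_iff.1 hF.hasFPowerSeriesAt.eventually_hasSum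
  refine ⟨ε, hε, fun z hz => ?_⟩
  refine (hsum (y := z) (by simpa using hz)).congr_fun fun n => ?_
  rw [FormalMultilinearSeries.ofScalars_apply_eq, smul_eq_mul]
  ring

lemma analyticAt_tanh (x : ℝ) : AnalyticAt ℝ Real.tanh x := by
  have htanh : Real.tanh = Real.sinh / Real.cosh := funext Real.tanh_eq_sinh_div_cosh
  rw [htanh]
  exact Real.analyticAt_sinh.div Real.analyticAt_cosh (Real.cosh_pos x).ne'

lemma hasDerivAt_tanh (x : ℝ) : HasDerivAt Real.tanh (1 - Real.tanh x ^ 2) x := by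
  have hcosh := (Real.cosh_pos x).ne'
  have htanh : Real.tanh = Real.sinh / Real.cosh := funext Real.tanh_eq_sinh_div_cosh
  rw [htanh]
  refine ((Real.hasDerivAt_sinh x).div (Real.hasDerivAt_cosh x) hcosh).congr_deriv ?_
  simp only [Pi.div_apply]
  field_simp

section Riccati

variable {𝕜 : Type*} [NontriviallyNormedField 𝕜]

/-- The weight `w` of `peakSum` along the generating function, as a function of `T = tanh (z * s)`,
where `1 - s ^ 2` is the weight of a peak. -/
def pairedGapWeight (s T : 𝕜) : 𝕜 := s ^ 2 * (1 - T ^ 2) / (s - T) ^ 2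

/-- The weight `b` of `peakSum` along the generating function, as a function of `T = tanh (z * s)`,
where `1 - s ^ 2` is the weight of a peak. -/
def raisingGapWeight (s T : 𝕜) : 𝕜 := s * (1 - s * T) / (s - T)

variable {s z : 𝕜} {T : 𝕜 → 𝕜}

lemma hasDerivAt_div_sub_of_riccati
    (hT : HasDerivAt T (s * (1 - T z ^ 2)) z) (hz : s - T z ≠ 0) :
    HasDerivAt (fun z => s / (s - T z)) (pairedGapWeight s (T z)) z := by
  refine ((hasDerivAt_const z s).div (hT.const_sub s) hz).congr_deriv ?_
  rw [pairedGapWeight]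
  ring

lemma hasDerivAt_pairedGapWeight
    (hT : HasDerivAt T (s * (1 - T z ^ 2)) z) (hz : s - T z ≠ 0) :
    HasDerivAt (fun z => pairedGapWeight s (T z))
      (2 * pairedGapWeight s (T z) * raisingGapWeight s (T z)) z := by
  refine ((((hT.fun_pow 2).const_sub 1).const_mul (s ^ 2)).div ((hT.const_sub s).fun_pow 2)
    (pow_ne_zero 2 hz)).congr_deriv ?_
  rw [pairedGapWeight, raisingGapWeight]
  field_simp
  ring

lemma hasDerivAt_raisingGapWeight
    (hT : HasDerivAt T (s * (1 - T z ^ 2)) z) (hz : s - T z ≠ 0) :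
    HasDerivAt (fun z => raisingGapWeight s (T z)) ((1 - s ^ 2) * pairedGapWeight s (T z)) z := by
  refine ((((hT.const_mul s).const_sub 1).const_mul s).div (hT.const_sub s) hz).congr_deriv ?_
  rw [pairedGapWeight]
  field_simp
  ring

end Riccati

lemma hasDerivAt_tanh_mul (s z : ℝ) :
    HasDerivAt (fun z => Real.tanh (z * s)) (s * (1 - Real.tanh (z * s) ^ 2)) z :=
  (HasDerivAt.comp (h₂ := Real.tanh) z (hasDerivAt_tanh (z * s))
    (hasDerivAt_mul_const s)).congr_deriv (mul_comm _ _)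

lemma iteratedDeriv_div_sub_tanh {s : ℝ} (hs : s ≠ 0) (n : ℕ) :
    iteratedDeriv n (fun z => s / (s - Real.tanh (z * s))) 0 = peakPoly n (1 - s ^ 2) := by
  have hne : ∀ᶠ z in nhds 0, s - Real.tanh (z * s) ≠ 0 :=
    ((hasDerivAt_tanh_mul s 0).const_sub s).continuousAt.eventually_ne (by simpa using hs)
  refine iteratedDeriv_eq_peakPoly
    (w := fun z => pairedGapWeight s (Real.tanh (z * s)))
    (b := fun z => raisingGapWeight s (Real.tanh (z * s)))
    (hne.mono fun z => hasDerivAt_div_sub_of_riccati (hasDerivAt_tanh_mul s z))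
    (hne.mono fun z => hasDerivAt_pairedGapWeight (hasDerivAt_tanh_mul s z))
    (hne.mono fun z => hasDerivAt_raisingGapWeight (hasDerivAt_tanh_mul s z)) ?_ ?_ ?_ n
  all_goals simp [pairedGapWeight, raisingGapWeight, hs]

lemma analyticAt_div_sub_tanh {s : ℝ} (hs : s ≠ 0) :
    AnalyticAt ℝ (fun z => s / (s - Real.tanh (z * s))) 0 := by
  have htanh : AnalyticAt ℝ (fun z => Real.tanh (z * s)) 0 :=
    (analyticAt_tanh (0 * s)).fun_comp_of_eq (by fun_prop) rfl
  exact analyticAt_const.div (analyticAt_const.sub htanh) (by simpa using hs)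

end Analysis

/-- For every real `t < 1`, there is `ε > 0` such that for all real `z` with `|z| < ε`,
the series `∑_{n≥0} Pₙ(t) zⁿ/n!` converges and equals
`√(1-t) / (√(1-t) - tanh(z√(1-t)))`. -/
theorem peak_poly_egf (t : ℝ) (ht : t < 1) :
    ∃ ε > 0, ∀ z : ℝ, |z| < ε →
      HasSum (fun n : ℕ => peakPoly n t * z ^ n / n.factorial)
        (Real.sqrt (1 - t) /
          (Real.sqrt (1 - t) - Real.tanh (z * Real.sqrt (1 - t)))) := by
  have hs : Real.sqrt (1 - t) ≠ 0 := (Real.sqrt_pos.2 (sub_pos.2 ht)).ne'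
  have ht_eq : 1 - Real.sqrt (1 - t) ^ 2 = t := by
    rw [Real.sq_sqrt (sub_nonneg.2 ht.le), sub_sub_cancel]
  simpa only [iteratedDeriv_div_sub_tanh hs, ht_eq, zero_add, Real.norm_eq_abs] using
    hasSum_iteratedDeriv_of_analyticAt (analyticAt_div_sub_tanh hs)
end

section
/- There exists α with 0 < α < 1/ρ such that fₙ = −2 ρ^{−(n+1)} cos((n+1)θ) · n! + O(αⁿ · n!) as n → ∞, where ρ = √((log(3+2√2))² + π²)/(2√2) and θ = arctan(π / log(3+2√2)). -/
/-!
Inserting a new largest value into a permutation of `n` letters with `k` peaks preserves the number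
of peaks for `2 * k + 2` positions and raises it by one for the others. If `y' = y ^ 2 - c`, the
monomials `(y ^ 2 - c) ^ (k + 1) * y ^ (n - 1 - 2 * k)` differentiate by the same rule, so that the
`n`-th derivative of `y` is the sum of these monomials over all permutations. With `y 0 = 1` and
`c = 1 - t` this sum is `t * Pₙ(t)` at the origin.

The solution is `y = -u' / u` for `u z = cosh (√(1 - t) * z - b / 2)`, where `b` is fixed by
`y 0 = 1`. The zeros of `u` are simple and lie on a vertical line, the nearest two to the origin
forming a conjugate pair; each contributes a pole of `u' / u` with residue `1`. Removing these two
poles leaves a function holomorphic in a larger disc, whose derivatives obey Cauchy's estimate.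
-/

namespace PeakPoly

open Finset

section Word

variable {α : Type*} [LinearOrder α] {n p j : ℕ} {m : α} {w w' : ℕ → α}

/-- The peaks of the word `w 0, …, w (n - 1)`. Words are functions on `ℕ` of which only the first
`n` letters matter, so that positions can be shifted without carrying bounds. -/
def peakSet (n : ℕ) (w : ℕ → α) : Finset ℕ :=
  {j ∈ range n | 1 ≤ j ∧ j + 1 < n ∧ w (j - 1) < w j ∧ w (j + 1) < w j}

lemma mem_peakSet :
    j ∈ peakSet n w ↔ 1 ≤ j ∧ j + 1 < n ∧ w (j - 1) < w j ∧ w (j + 1) < w j := by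
  simp only [peakSet, mem_filter, mem_range]
  lia

lemma peakSet_congr (h : ∀ j < n, w j = w' j) : peakSet n w = peakSet n w' := by
  ext j
  grind [mem_peakSet]

lemma succ_notMem_peakSet (hj : j ∈ peakSet n w) : j + 1 ∉ peakSet n w := fun hj' ↦
  lt_asymm (mem_peakSet.1 hj).2.2.2 (mem_peakSet.1 hj').2.2.1

/-- The word `w` with the letter `m` inserted just before position `p`. -/
def insertLetter (p : ℕ) (m : α) (w : ℕ → α) (j : ℕ) : α :=
  if j < p then w j else if j = p then m else w (j - 1)

/-- The position in `insertLetter p m w` of the letter that was at position `j` in `w`. -/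
def skip (p j : ℕ) : ℕ := if j < p then j else j + 1

lemma skip_injective (p : ℕ) : Function.Injective (skip p) := by
  grind [Function.Injective, skip]

lemma mem_peakSet_insertLetter_self (hw : ∀ j < n, w j < m) :
    p ∈ peakSet (n + 1) (insertLetter p m w) ↔ 0 < p ∧ p < n := by
  grind [mem_peakSet, insertLetter]

lemma skip_mem_peakSet_insertLetter (hw : ∀ j < n, w j < m) (hp : p ≤ n) :
    skip p j ∈ peakSet (n + 1) (insertLetter p m w) ↔
      j ∈ peakSet n w ∧ j ≠ p ∧ j + 1 ≠ p := by
  grind [mem_peakSet, insertLetter, skip]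

lemma peakSet_insertLetter_erase (hw : ∀ j < n, w j < m) (hp : p ≤ n) :
    (peakSet (n + 1) (insertLetter p m w)).erase p =
      {j ∈ peakSet n w | j ≠ p ∧ j + 1 ≠ p}.image (skip p) := by
  ext i
  simp only [mem_erase, mem_image, mem_filter, ← skip_mem_peakSet_insertLetter hw hp]
  constructor
  · rintro ⟨hip, hi⟩
    obtain ⟨j, rfl⟩ : ∃ j, skip p j = i :=
      ⟨if i < p then i else i - 1, by grind [skip]⟩
    exact ⟨j, hi, rfl⟩
  · rintro ⟨j, hj, rfl⟩
    exact ⟨by grind [skip], hj⟩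

lemma card_peakSet_insertLetter (hw : ∀ j < n, w j < m) (hp : p ≤ n) :
    #(peakSet (n + 1) (insertLetter p m w)) =
      #{j ∈ peakSet n w | j ≠ p ∧ j + 1 ≠ p} + if 0 < p ∧ p < n then 1 else 0 := by
  rw [← card_image_of_injective (filter ..) (skip_injective p), ← peakSet_insertLetter_erase hw hp]
  split_ifs with hpn
  · exact (card_erase_add_one ((mem_peakSet_insertLetter_self hw).2 hpn)).symm
  · rw [erase_eq_of_notMem (mt (mem_peakSet_insertLetter_self hw).1 hpn), add_zero]

/-- The insertion positions at which a new largest letter leaves the number of peaks unchanged: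
the two ends of the word and the two sides of each peak. -/
def neutralSlots (n : ℕ) (w : ℕ → α) : Finset ℕ :=
  {0, n} ∪ (peakSet n w ∪ (peakSet n w).map (addRightEmbedding 1))

lemma mem_neutralSlots :
    p ∈ neutralSlots n w ↔
      (p = 0 ∨ p = n) ∨ p ∈ peakSet n w ∨ ∃ j ∈ peakSet n w, j + 1 = p := by
  simp only [neutralSlots, mem_union, mem_insert, mem_singleton, mem_map, addRightEmbedding_apply]

lemma neutralSlots_subset (n : ℕ) (w : ℕ → α) : neutralSlots n w ⊆ range (n + 1) := by
  intro p
  grind [mem_neutralSlots, mem_peakSet]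

lemma card_neutralSlots (hn : 0 < n) (w : ℕ → α) :
    #(neutralSlots n w) = 2 * #(peakSet n w) + 2 := by
  have disjoint_sides : Disjoint (peakSet n w) ((peakSet n w).map (addRightEmbedding 1)) := by
    rw [disjoint_right]
    simp only [mem_map, addRightEmbedding_apply]
    rintro _ ⟨j, hj, rfl⟩
    exact succ_notMem_peakSet hj
  have disjoint_ends :
      Disjoint {0, n} (peakSet n w ∪ (peakSet n w).map (addRightEmbedding 1)) := by
    rw [disjoint_left]
    grind [mem_peakSet]
  rw [neutralSlots, card_union_of_disjoint disjoint_ends, card_union_of_disjoint disjoint_sides,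
    card_map, card_pair hn.ne]
  ring

lemma two_mul_card_peakSet_lt (hn : 0 < n) (w : ℕ → α) : 2 * #(peakSet n w) < n := by
  have := card_le_card (neutralSlots_subset n w)
  rw [card_neutralSlots hn, card_range] at this
  lia

lemma card_peakSet_insertLetter_of_mem (hw : ∀ j < n, w j < m) (hp : p ∈ neutralSlots n w) :
    #(peakSet (n + 1) (insertLetter p m w)) = #(peakSet n w) := by
  have hpn : p ≤ n := mem_range_succ_iff.1 (neutralSlots_subset n w hp)
  rw [card_peakSet_insertLetter hw hpn]
  rcases mem_neutralSlots.1 hp with p_end | p_peak | ⟨j, j_peak, rfl⟩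
  · have : {j ∈ peakSet n w | j ≠ p ∧ j + 1 ≠ p} = peakSet n w :=
      filter_true_of_mem (by grind [mem_peakSet])
    rw [this, if_neg (by lia), add_zero]
  · have : {j ∈ peakSet n w | j ≠ p ∧ j + 1 ≠ p} = (peakSet n w).erase p := by
      grind [succ_notMem_peakSet]
    rw [this, if_pos (by grind [mem_peakSet]), card_erase_add_one p_peak]
  · have : {i ∈ peakSet n w | i ≠ j + 1 ∧ i + 1 ≠ j + 1} = (peakSet n w).erase j := by
      grind [succ_notMem_peakSet]
    rw [this, if_pos (by grind [mem_peakSet]), card_erase_add_one j_peak]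

lemma card_peakSet_insertLetter_of_notMem (hw : ∀ j < n, w j < m) (hpn : p ≤ n)
    (hp : p ∉ neutralSlots n w) :
    #(peakSet (n + 1) (insertLetter p m w)) = #(peakSet n w) + 1 := by
  rw [mem_neutralSlots] at hp
  have : {j ∈ peakSet n w | j ≠ p ∧ j + 1 ≠ p} = peakSet n w :=
    filter_true_of_mem (by grind)
  rw [card_peakSet_insertLetter hw hpn, this, if_pos (by lia)]

lemma sum_card_peakSet_insertLetter {R : Type*} [NonAssocSemiring R] (hn : 0 < n)
    (hw : ∀ j < n, w j < m) (g : ℕ → R) :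
    ∑ p ∈ range (n + 1), g #(peakSet (n + 1) (insertLetter p m w)) =
      (2 * #(peakSet n w) + 2 : ℕ) * g #(peakSet n w) +
        (n - 1 - 2 * #(peakSet n w) : ℕ) * g (#(peakSet n w) + 1) := by
  rw [← sum_sdiff (neutralSlots_subset n w), add_comm]
  congr 1
  · rw [← card_neutralSlots hn, ← nsmul_eq_mul, ← sum_const]
    exact sum_congr rfl fun p hp ↦ by rw [card_peakSet_insertLetter_of_mem hw hp]
  · have card_complement :
        #(range (n + 1) \ neutralSlots n w) = n - 1 - 2 * #(peakSet n w) := by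
      rw [card_sdiff_of_subset (neutralSlots_subset n w), card_neutralSlots hn, card_range]
      lia
    rw [← card_complement, ← nsmul_eq_mul, ← sum_const]
    refine sum_congr rfl fun p hp ↦ ?_
    obtain ⟨hpn, hp⟩ := mem_sdiff.1 hp
    rw [card_peakSet_insertLetter_of_notMem hw (mem_range_succ_iff.1 hpn) hp]

end Word

section Perm

variable {n : ℕ}

/-- The one-line notation of `σ`, with junk letter `0` from position `n` on. -/
def permWord (σ : Equiv.Perm (Fin n)) (j : ℕ) : ℕ := if h : j < n then σ ⟨j, h⟩ else 0

lemma permWord_lt (σ : Equiv.Perm (Fin n)) {j : ℕ} (hj : j < n) : permWord σ j < n := by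
  simp [permWord, hj]

lemma numPeaks_eq_card_peakSet (σ : Equiv.Perm (Fin n)) :
    numPeaks σ = #(peakSet n (permWord σ)) := by
  rw [numPeaks, ← card_map Fin.valEmbedding]
  congr 1
  ext j
  simp only [mem_map, mem_filter_univ, Fin.valEmbedding_apply, mem_peakSet]
  constructor
  · rintro ⟨i, ⟨one_le, lt_last, left, right⟩, rfl⟩
    have : (i : ℕ) - 1 < n := by lia
    simpa [permWord, this, lt_last, one_le] using ⟨left, right⟩
  · rintro ⟨one_le, lt_last, left, right⟩
    have : j - 1 < n := by lia
    have hj : j < n := by lia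
    exact ⟨⟨j, hj⟩, ⟨one_le, lt_last, by simpa [permWord, hj, this] using left,
      by simpa [permWord, hj, lt_last] using right⟩, rfl⟩

lemma two_mul_numPeaks_le (σ : Equiv.Perm (Fin (n + 1))) : 2 * numPeaks σ ≤ n := by
  rw [numPeaks_eq_card_peakSet]
  exact Nat.lt_succ_iff.1 (two_mul_card_peakSet_lt n.succ_pos _)

/-- The permutation obtained from `σ` by inserting the new largest value at position `p`. -/
def insertMax (p : Fin (n + 1)) (σ : Equiv.Perm (Fin n)) : Equiv.Perm (Fin (n + 1)) :=
  (finSuccEquiv' p).trans (σ.optionCongr.trans (finSuccEquiv' (Fin.last n)).symm)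

lemma insertMax_self (p : Fin (n + 1)) (σ : Equiv.Perm (Fin n)) :
    insertMax p σ p = Fin.last n := by
  simp [insertMax]

lemma insertMax_succAbove (p : Fin (n + 1)) (σ : Equiv.Perm (Fin n)) (i : Fin n) :
    insertMax p σ (p.succAbove i) = (σ i).castSucc := by
  simp [insertMax]

lemma insertMax_bijective (n : ℕ) :
    Function.Bijective fun x : Fin (n + 1) × Equiv.Perm (Fin n) ↦ insertMax x.1 x.2 := by
  rw [Fintype.bijective_iff_injective_and_card]
  refine ⟨?_, by simp [Fintype.card_perm, Nat.factorial_succ]⟩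
  rintro ⟨p, σ⟩ ⟨q, τ⟩ (h : insertMax p σ = insertMax q τ)
  obtain rfl : p = q := (insertMax q τ).injective (by rw [insertMax_self, ← h, insertMax_self])
  congr 1
  ext i : 1
  apply Fin.castSucc_injective
  rw [← insertMax_succAbove p, h, insertMax_succAbove]

lemma permWord_insertMax (p : Fin (n + 1)) (σ : Equiv.Perm (Fin n)) {j : ℕ} (hj : j < n + 1) :
    permWord (insertMax p σ) j = insertLetter p n (permWord σ) j := by
  rcases Fin.eq_self_or_eq_succAbove p ⟨j, hj⟩ with h | ⟨i, h⟩
  · obtain rfl : j = p := congrArg Fin.val h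
    rw [permWord, dif_pos hj, h, insertMax_self]
    simp [insertLetter]
  · have hj' : j = if (i : ℕ) < p then (i : ℕ) else i + 1 := by
      have := congrArg Fin.val h
      simpa [Fin.succAbove, Fin.lt_def, apply_ite Fin.val] using this
    have value : permWord (insertMax p σ) j = σ i := by
      rw [permWord, dif_pos hj, h, insertMax_succAbove, Fin.val_castSucc]
    rw [value]
    grind [insertLetter, permWord]

lemma numPeaks_insertMax (p : Fin (n + 1)) (σ : Equiv.Perm (Fin n)) :
    numPeaks (insertMax p σ) = #(peakSet (n + 1) (insertLetter p n (permWord σ))) := by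
  rw [numPeaks_eq_card_peakSet, peakSet_congr fun j ↦ permWord_insertMax p σ]

lemma sum_numPeaks_succ {R : Type*} [NonAssocSemiring R] (n : ℕ) (g : ℕ → R) :
    ∑ τ : Equiv.Perm (Fin (n + 2)), g (numPeaks τ) =
      ∑ σ : Equiv.Perm (Fin (n + 1)), ((2 * numPeaks σ + 2 : ℕ) * g (numPeaks σ) +
        (n - 2 * numPeaks σ : ℕ) * g (numPeaks σ + 1)) := by
  rw [← (insertMax_bijective (n + 1)).sum_comp, Fintype.sum_prod_type_right]
  refine sum_congr rfl fun σ _ ↦ ?_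
  simp only [numPeaks_insertMax, numPeaks_eq_card_peakSet σ]
  rw [Fin.sum_univ_eq_sum_range
      (fun p ↦ g #(peakSet (n + 1 + 1) (insertLetter p (n + 1) (permWord σ)))),
    sum_card_peakSet_insertLetter n.add_one_pos fun j ↦ permWord_lt σ, Nat.add_sub_cancel]

end Perm

section Riccati

variable {𝕜 : Type*} [NontriviallyNormedField 𝕜] {c z : 𝕜}

lemma hasDerivAt_riccati_monomial {y : 𝕜 → 𝕜} (hy : HasDerivAt y (y z ^ 2 - c) z) (k m : ℕ) :
    HasDerivAt (fun z ↦ (y z ^ 2 - c) ^ (k + 1) * y z ^ m)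
      ((2 * k + 2 : ℕ) * ((y z ^ 2 - c) ^ (k + 1) * y z ^ (m + 1)) +
        m * ((y z ^ 2 - c) ^ (k + 2) * y z ^ (m - 1))) z := by
  refine ((((hy.fun_pow 2).sub_const c).fun_pow (k + 1)).fun_mul (hy.fun_pow m)).congr_deriv ?_
  simp only [Nat.add_sub_cancel]
  push_cast
  ring

lemma iteratedDeriv_succ_of_riccati {U : Set 𝕜} (hU : IsOpen U) {y : 𝕜 → 𝕜}
    (hy : ∀ z ∈ U, HasDerivAt y (y z ^ 2 - c) z) (n : ℕ) (hz : z ∈ U) :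
    iteratedDeriv (n + 1) y z = ∑ σ : Equiv.Perm (Fin (n + 1)),
      (y z ^ 2 - c) ^ (numPeaks σ + 1) * y z ^ (n - 2 * numPeaks σ) := by
  induction n generalizing z with
  | zero =>
    have no_peak : numPeaks (1 : Equiv.Perm (Fin 1)) = 0 := by
      have := two_mul_numPeaks_le (1 : Equiv.Perm (Fin 1))
      lia
    simp [iteratedDeriv_one, (hy z hz).deriv, no_peak]
  | succ n ih =>
    have expansion : Set.EqOn (iteratedDeriv (n + 1) y) _ U := fun z hz ↦ ih hz
    rw [iteratedDeriv_succ, (expansion.eventuallyEq_of_mem (hU.mem_nhds hz)).deriv_eq,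
      sum_numPeaks_succ n fun k ↦ (y z ^ 2 - c) ^ (k + 1) * y z ^ (n + 1 - 2 * k)]
    refine (HasDerivAt.fun_sum fun σ _ ↦ ?_).deriv
    refine (hasDerivAt_riccati_monomial (hy z hz) (numPeaks σ) (n - 2 * numPeaks σ)).congr_deriv ?_
    have := two_mul_numPeaks_le σ
    rw [show n - 2 * numPeaks σ + 1 = n + 1 - 2 * numPeaks σ by lia,
      show n - 2 * numPeaks σ - 1 = n + 1 - 2 * (numPeaks σ + 1) by lia]

lemma hasDerivAt_neg_logDeriv {u : 𝕜 → 𝕜} (hu : DifferentiableAt 𝕜 u z)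
    (hu' : HasDerivAt (deriv u) (c * u z) z) (hz : u z ≠ 0) :
    HasDerivAt (-logDeriv u) ((-logDeriv u) z ^ 2 - c) z := by
  refine (hu'.div hu.hasDerivAt hz).neg.congr_deriv ?_
  rw [Pi.neg_apply, logDeriv_apply]
  field_simp
  ring

end Riccati

lemma iteratedDeriv_logDeriv_eq_peakPoly {u : ℂ → ℂ} {t : ℝ} (hu : Differentiable ℂ u)
    (hu' : ∀ z, HasDerivAt (deriv u) ((1 - t) * u z) z) (hu0 : u 0 ≠ 0)
    (hdu0 : deriv u 0 = -u 0) {n : ℕ} (hn : n ≠ 0) :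
    iteratedDeriv n (logDeriv u) 0 = -(t * peakPoly n t : ℝ) := by
  obtain ⟨n, rfl⟩ := Nat.exists_eq_succ_of_ne_zero hn
  have initial_value : (-logDeriv u) 0 = 1 := by
    rw [Pi.neg_apply, logDeriv_apply, hdu0, neg_div, div_self hu0, neg_neg]
  have expansion := iteratedDeriv_succ_of_riccati (isOpen_ne_fun hu.continuous continuous_const)
    (fun z hz ↦ hasDerivAt_neg_logDeriv (hu z) (hu' z) hz) n hu0
  rw [iteratedDeriv_neg, neg_eq_iff_eq_neg] at expansion
  rw [Nat.succ_eq_add_one, expansion, initial_value, peakPoly, mul_sum]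
  push_cast
  congr 1
  refine sum_congr rfl fun σ _ ↦ ?_
  ring

section Factorization

variable {𝕜 : Type*} [NontriviallyNormedField 𝕜] {u v : 𝕜 → 𝕜} {a p z : 𝕜}

lemma eq_sub_mul_dslope (ha : u a = 0) (z : 𝕜) : u z = (z - a) * dslope u a z := by
  rw [← smul_eq_mul, sub_smul_dslope, ha, sub_zero]

lemma dslope_eq_zero_of_ne (hpa : p ≠ a) (ha : u a = 0) (hp : u p = 0) : dslope u a p = 0 := by
  rw [eq_sub_mul_dslope ha] at hp
  exact (mul_eq_zero.1 hp).resolve_left (sub_ne_zero.2 hpa)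

lemma deriv_eq_sub_mul_deriv_dslope (hu : DifferentiableAt 𝕜 u p) (hpa : p ≠ a)
    (ha : u a = 0) (hp : u p = 0) : deriv u p = (p - a) * deriv (dslope u a) p := by
  have product := ((hasDerivAt_id p).sub_const a).fun_mul
    ((differentiableAt_dslope_of_ne hpa).2 hu).hasDerivAt
  calc deriv u p
      = deriv (fun z ↦ (z - a) * dslope u a z) p :=
        congrArg (deriv · p) (funext (eq_sub_mul_dslope ha))
    _ = (p - a) * deriv (dslope u a) p := by
        simpa [dslope_eq_zero_of_ne hpa ha hp] using product.deriv

lemma logDeriv_prod_sub_mul {s : Finset 𝕜} (hz : z ∉ s) (hv : DifferentiableAt 𝕜 v z)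
    (hvz : v z ≠ 0) :
    logDeriv (fun z ↦ (∏ p ∈ s, (z - p)) * v z) z = ∑ p ∈ s, (z - p)⁻¹ + logDeriv v z := by
  have sub_ne : ∀ p ∈ s, z - p ≠ 0 := fun p hp ↦ sub_ne_zero.2 (ne_of_mem_of_not_mem hp hz).symm
  rw [logDeriv_mul z (prod_ne_zero_iff.2 sub_ne) hvz (by fun_prop) hv,
    logDeriv_prod sub_ne (by fun_prop)]
  simp [logDeriv_apply]

lemma iteratedDeriv_inv_sub_zero (n : ℕ) (p : 𝕜) :
    iteratedDeriv n (fun z ↦ (z - p)⁻¹) 0 = -(n.factorial * p ^ (-((n : ℤ) + 1))) := by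
  have formula := congrFun (iter_deriv_inv_linear_sub n 1 p) 0
  simp only [one_mul, one_pow, mul_one, zero_sub, ← iteratedDeriv_eq_iterate] at formula
  rw [formula, show (-1 - n : ℤ) = -((n + 1 : ℕ) : ℤ) by push_cast; ring,
    show -((n : ℤ) + 1) = -((n + 1 : ℕ) : ℤ) by push_cast; ring, zpow_neg, zpow_neg, zpow_natCast,
    zpow_natCast, neg_pow p, mul_inv, ← inv_pow, inv_neg_one, pow_succ (-1 : 𝕜)]
  have sign : (-1 : 𝕜) ^ n * (-1) ^ n = 1 := by rw [← mul_pow, neg_one_mul, neg_neg, one_pow]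
  linear_combination (-(n.factorial : 𝕜) * (p ^ (n + 1))⁻¹) * sign

end Factorization

section Singularities

open Filter Metric
open scoped Topology

variable {U : Set ℂ} {u : ℂ → ℂ} {r R : ℝ}

lemma exists_eq_prod_sub_mul (hU : IsOpen U) (s : Finset ℂ) (hs : ↑s ⊆ U)
    (hu : DifferentiableOn ℂ u U) (zero : ∀ p ∈ s, u p = 0) (simple : ∀ p ∈ s, deriv u p ≠ 0) :
    ∃ v : ℂ → ℂ, DifferentiableOn ℂ v U ∧ (∀ z, u z = (∏ p ∈ s, (z - p)) * v z) ∧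
      ∀ p ∈ s, v p ≠ 0 := by
  induction s using Finset.cons_induction generalizing u with
  | empty => exact ⟨u, hu, by simp, by simp⟩
  | cons a s ha ih =>
    simp only [coe_cons, Set.insert_subset_iff, forall_mem_cons] at hs zero simple
    have ne_of_mem {p : ℂ} (hp : p ∈ s) : p ≠ a := ne_of_mem_of_not_mem hp ha
    have dslope_diff : DifferentiableOn ℂ (dslope u a) U :=
      (Complex.differentiableOn_dslope (hU.mem_nhds hs.1)).2 hu
    have dslope_zero : ∀ p ∈ s, dslope u a p = 0 := fun p hp ↦
      dslope_eq_zero_of_ne (ne_of_mem hp) zero.1 (zero.2 p hp)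
    have dslope_simple : ∀ p ∈ s, deriv (dslope u a) p ≠ 0 := fun p hp ↦ by
      have := simple.2 p hp
      rw [deriv_eq_sub_mul_deriv_dslope (hu.differentiableAt (hU.mem_nhds (hs.2 hp)))
        (ne_of_mem hp) zero.1 (zero.2 p hp)] at this
      exact right_ne_zero_of_mul this
    obtain ⟨v, hv, factor, v_ne⟩ := ih hs.2 dslope_diff dslope_zero dslope_simple
    refine ⟨v, hv, fun z ↦ ?_, (forall_mem_cons ha _).2 ⟨?_, v_ne⟩⟩
    · rw [prod_cons, mul_assoc, ← factor, ← eq_sub_mul_dslope zero.1]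
    · rw [← dslope_same, factor] at simple
      exact right_ne_zero_of_mul simple.1

lemma iteratedDeriv_isBigO_of_differentiableOn_ball {F : Type*} [NormedAddCommGroup F]
    [NormedSpace ℂ F] [CompleteSpace F] {g : ℂ → F} {c : ℂ} (hr : 0 < r) (hrR : r < R)
    (hg : DifferentiableOn ℂ g (ball c R)) :
    (fun n ↦ iteratedDeriv n g c) =O[atTop] fun n ↦ r⁻¹ ^ n * (n.factorial : ℝ) := by
  have subset : closedBall c r ⊆ ball c R := closedBall_subset_ball hrR
  obtain ⟨C, hC⟩ := (isCompact_sphere c r).exists_bound_of_continuousOn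
    (hg.continuousOn.mono (sphere_subset_closedBall.trans subset))
  have hg' : DiffContOnCl ℂ g (ball c r) :=
    DifferentiableOn.diffContOnCl (by rw [closure_ball _ hr.ne']; exact hg.mono subset)
  refine .of_bound C (.of_forall fun n ↦ ?_)
  calc ‖iteratedDeriv n g c‖
      ≤ n.factorial * C / r ^ n :=
        Complex.norm_iteratedDeriv_le_of_forall_mem_sphere_norm_le n hr hg' hC
    _ = C * ‖r⁻¹ ^ n * (n.factorial : ℝ)‖ := by
        rw [Real.norm_of_nonneg (by positivity), inv_pow]
        ring

lemma iteratedDeriv_logDeriv_add_sum_isBigO {s : Finset ℂ} (hr : 0 < r) (hrR : r < R)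
    (hu : DifferentiableOn ℂ u (ball 0 R)) (hu0 : u 0 ≠ 0)
    (mem_iff : ∀ z, z ∈ s ↔ z ∈ ball 0 R ∧ u z = 0) (simple : ∀ p ∈ s, deriv u p ≠ 0) :
    (fun n ↦ iteratedDeriv n (logDeriv u) 0 +
        n.factorial * ∑ p ∈ s, p ^ (-((n : ℤ) + 1))) =O[atTop]
      fun n ↦ r⁻¹ ^ n * (n.factorial : ℝ) := by
  obtain ⟨v, hv, factor, v_ne⟩ := exists_eq_prod_sub_mul isOpen_ball s
    (fun p hp ↦ ((mem_iff p).1 hp).1) hu (fun p hp ↦ ((mem_iff p).1 hp).2) simple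
  have v_ne_zero : ∀ z ∈ ball (0 : ℂ) R, v z ≠ 0 := fun z hz hvz ↦
    v_ne z ((mem_iff z).2 ⟨hz, by rw [factor, hvz, mul_zero]⟩) hvz
  have zero_notMem : (0 : ℂ) ∉ s := fun h ↦ hu0 ((mem_iff 0).1 h).2
  have ball_mem : ball (0 : ℂ) R ∈ 𝓝 0 := ball_mem_nhds 0 (hr.trans hrR)
  have logDeriv_v_diff : DifferentiableOn ℂ (logDeriv v) (ball 0 R) :=
    (hv.deriv isOpen_ball).div hv v_ne_zero
  have partial_fractions :
      logDeriv u =ᶠ[𝓝 0] (fun z ↦ ∑ p ∈ s, (z - p)⁻¹) + logDeriv v := by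
    filter_upwards [ball_mem, s.finite_toSet.isClosed.isOpen_compl.mem_nhds zero_notMem]
      with z hz hzs
    rw [funext factor]
    exact logDeriv_prod_sub_mul hzs (hv.differentiableAt (isOpen_ball.mem_nhds hz)) (v_ne_zero z hz)
  have estimate := iteratedDeriv_isBigO_of_differentiableOn_ball hr hrR logDeriv_v_diff
  refine estimate.congr_left fun n ↦ ?_
  have pole_contDiff : ∀ p ∈ s, ContDiffAt ℂ n (fun z ↦ (z - p)⁻¹) 0 := fun p hp ↦
    (contDiffAt_id.sub contDiffAt_const).inv
      (sub_ne_zero.2 (ne_of_mem_of_not_mem hp zero_notMem).symm)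
  rw [partial_fractions.iteratedDeriv_eq, iteratedDeriv_add (.sum pole_contDiff)
    (logDeriv_v_diff.analyticAt ball_mem).contDiffAt, iteratedDeriv_fun_sum pole_contDiff]
  simp only [iteratedDeriv_inv_sub_zero, sum_neg_distrib, mul_sum]
  ring

end Singularities

section Polar

open ComplexConjugate

lemma arg_eq_arctan_of_re_pos {z : ℂ} (hz : 0 < z.re) : z.arg = Real.arctan (z.im / z.re) := by
  have arg_bounds := abs_lt.1 (Complex.abs_arg_lt_pi_div_two_iff.2 (.inl hz))
  rw [← Complex.tan_arg, Real.arctan_tan arg_bounds.1 arg_bounds.2]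

lemma zpow_add_conj_zpow (z : ℂ) (m : ℤ) :
    z ^ m + conj z ^ m = (2 * ‖z‖ ^ m * Real.cos (m * z.arg) : ℝ) := by
  have polar : z ^ m = (‖z‖ ^ m : ℝ) * Complex.exp ((m * z.arg : ℝ) * Complex.I) := by
    conv_lhs => rw [← Complex.norm_mul_exp_arg_mul_I z]
    rw [mul_zpow, ← Complex.exp_int_mul]
    push_cast
    ring_nf
  rw [← map_zpow₀, Complex.add_conj, polar, Complex.re_ofReal_mul, Complex.exp_ofReal_mul_I_re,
    mul_assoc]

end Polar

section Cosh

open Filter Metric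
open scoped ComplexConjugate

lemma cosh_eq_zero_iff {z : ℂ} :
    Complex.cosh z = 0 ↔ ∃ k : ℤ, z = (2 * k + 1) * Real.pi / 2 * Complex.I := by
  rw [← Complex.cos_mul_I, Complex.cos_eq_zero_iff]
  constructor <;> rintro ⟨k, hk⟩ <;> refine ⟨-k - 1, ?_⟩ <;> push_cast
  · linear_combination -Complex.I * hk + z * Complex.I_sq
  · linear_combination Complex.I * hk + (2 * k + 1) * Real.pi / 2 * Complex.I_sq

section Deriv

variable (a c z : ℂ)

lemma hasDerivAt_cosh_mul_sub :
    HasDerivAt (fun z ↦ Complex.cosh (a * z - c)) (a * Complex.sinh (a * z - c)) z := by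
  simpa [mul_comm] using (((hasDerivAt_id z).const_mul a).sub_const c).ccosh

lemma deriv_cosh_mul_sub :
    deriv (fun z ↦ Complex.cosh (a * z - c)) = fun z ↦ a * Complex.sinh (a * z - c) :=
  funext fun z ↦ (hasDerivAt_cosh_mul_sub a c z).deriv

lemma hasDerivAt_deriv_cosh_mul_sub :
    HasDerivAt (deriv fun z ↦ Complex.cosh (a * z - c)) (a ^ 2 * Complex.cosh (a * z - c)) z := by
  rw [deriv_cosh_mul_sub]
  refine ((((hasDerivAt_id z).const_mul a).sub_const c).csinh.const_mul a).congr_deriv ?_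
  simp only [id_eq]
  ring

variable {a c z} in
lemma deriv_cosh_mul_sub_ne_zero (ha : a ≠ 0) (hz : Complex.cosh (a * z - c) = 0) :
    deriv (fun z ↦ Complex.cosh (a * z - c)) z ≠ 0 := by
  rw [deriv_cosh_mul_sub]
  refine mul_ne_zero ha fun sinh_eq_zero ↦ ?_
  have := Complex.cosh_sq_sub_sinh_sq (a * z - c)
  simp [hz, sinh_eq_zero] at this

end Deriv

lemma cosh_ofReal_ne_zero (x : ℝ) : Complex.cosh x ≠ 0 := by
  exact_mod_cast (Real.cosh_pos x).ne'

variable {a b : ℝ}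

/-- The zeros of `z ↦ cosh (a * z - b / 2)`, indexed by `k : ℤ` and given by their real and
imaginary parts; meaningful for `a ≠ 0`. -/
noncomputable def coshZero (a b : ℝ) (k : ℤ) : ℂ :=
  ⟨b / (2 * a), (2 * k + 1) * Real.pi / (2 * a)⟩

lemma cosh_mul_sub_eq_zero_iff (ha : a ≠ 0) {z : ℂ} :
    Complex.cosh (a * z - b / 2) = 0 ↔ ∃ k : ℤ, z = coshZero a b k := by
  have ha' : (a : ℂ) ≠ 0 := Complex.ofReal_ne_zero.2 ha
  rw [cosh_eq_zero_iff]
  refine exists_congr fun k ↦ ?_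
  rw [coshZero, Complex.mk_eq_add_mul_I, sub_eq_iff_eq_add, mul_comm, ← eq_div_iff ha']
  push_cast
  field_simp
  ring_nf

lemma norm_coshZero (ha : 0 < a) (k : ℤ) :
    ‖coshZero a b k‖ = √(b ^ 2 + ((2 * k + 1) * Real.pi) ^ 2) / (2 * a) := by
  rw [coshZero, Complex.norm_eq_sqrt_sq_add_sq, div_pow, div_pow, ← add_div,
    Real.sqrt_div (by positivity), Real.sqrt_sq (by positivity)]

lemma norm_coshZero_lt_norm_coshZero_iff (ha : 0 < a) {k l : ℤ} :
    ‖coshZero a b k‖ < ‖coshZero a b l‖ ↔ |2 * k + 1| < |2 * l + 1| := by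
  rw [norm_coshZero ha, norm_coshZero ha, div_lt_div_iff_of_pos_right (by positivity),
    Real.sqrt_lt_sqrt_iff (by positivity), add_lt_add_iff_left, mul_pow, mul_pow,
    mul_lt_mul_iff_of_pos_right (by positivity), sq_lt_sq]
  norm_cast

lemma coshZero_neg_one (a b : ℝ) : coshZero a b (-1) = conj (coshZero a b 0) := by
  apply Complex.ext
  · rfl
  · simp only [coshZero, Complex.conj_im, Int.cast_neg, Int.cast_one, Int.cast_zero]
    ring

lemma mem_coshZero_pair_iff (ha : 0 < a) (z : ℂ) :
    z ∈ ({coshZero a b 0, coshZero a b (-1)} : Finset ℂ) ↔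
      z ∈ ball 0 ‖coshZero a b 1‖ ∧ Complex.cosh (a * z - b / 2) = 0 := by
  have norm_lt (k : ℤ) : ‖coshZero a b k‖ < ‖coshZero a b 1‖ ↔ k = 0 ∨ k = -1 := by
    rw [norm_coshZero_lt_norm_coshZero_iff ha]
    grind
  rw [mem_insert, mem_singleton, mem_ball_zero_iff, cosh_mul_sub_eq_zero_iff ha.ne']
  constructor
  · rintro (rfl | rfl)
    · exact ⟨(norm_lt 0).2 (.inl rfl), 0, rfl⟩
    · exact ⟨(norm_lt (-1)).2 (.inr rfl), -1, rfl⟩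
  · rintro ⟨hz, k, rfl⟩
    rcases (norm_lt k).1 hz with rfl | rfl
    · exact .inl rfl
    · exact .inr rfl

lemma arg_coshZero_zero (ha : 0 < a) (hb : 0 < b) :
    (coshZero a b 0).arg = Real.arctan (Real.pi / b) := by
  have re_pos : 0 < (coshZero a b 0).re := by
    simp only [coshZero]
    positivity
  rw [arg_eq_arctan_of_re_pos re_pos]
  simp only [coshZero, Int.cast_zero, mul_zero, zero_add, one_mul]
  rw [div_div_div_cancel_right₀ (by positivity)]

lemma coshZero_injective (ha : a ≠ 0) : Function.Injective (coshZero a b) := by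
  intro k l hkl
  have im_eq := congrArg Complex.im hkl
  simpa [coshZero, ha, Real.pi_ne_zero, div_left_inj'] using im_eq

lemma iteratedDeriv_logDeriv_cosh_isBigO (ha : 0 < a) (hb : 0 < b) {r : ℝ} (hr : 0 < r)
    (hr' : r < ‖coshZero a b 1‖) :
    (fun n : ℕ ↦ iteratedDeriv n (logDeriv fun z : ℂ ↦ Complex.cosh (a * z - b / 2)) 0 +
        (n.factorial * (2 * ‖coshZero a b 0‖ ^ (-((n : ℤ) + 1)) *
          Real.cos ((n + 1) * Real.arctan (Real.pi / b))) : ℝ)) =O[atTop]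
      fun n ↦ r⁻¹ ^ n * (n.factorial : ℝ) := by
  refine (iteratedDeriv_logDeriv_add_sum_isBigO hr hr'
    (fun z _ ↦ (hasDerivAt_cosh_mul_sub a _ z).differentiableAt.differentiableWithinAt)
    (by simpa using cosh_ofReal_ne_zero (b / 2)) (mem_coshZero_pair_iff ha) fun p hp ↦
      deriv_cosh_mul_sub_ne_zero (Complex.ofReal_ne_zero.2 ha.ne')
        ((mem_coshZero_pair_iff ha p).1 hp).2).congr_left fun n ↦ ?_
  rw [sum_pair ((coshZero_injective ha.ne').ne (by decide)), coshZero_neg_one, zpow_add_conj_zpow,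
    arg_coshZero_zero ha hb, Complex.ofReal_mul _ (2 * _ * _), Complex.ofReal_natCast]
  congr 4
  rw [← Real.cos_neg]
  push_cast
  ring_nf

end Cosh

lemma inv_sqrt_one_sub_mem_Ioo {t : ℝ} (ht : t < 0) : (√(1 - t))⁻¹ ∈ Set.Ioo 0 1 := by
  have one_lt_sqrt : 1 < √(1 - t) := Real.lt_sqrt_of_sq_lt (by linarith)
  exact ⟨by positivity, inv_lt_one_of_one_lt₀ one_lt_sqrt⟩

lemma log_eq_two_mul_artanh_inv_sqrt {t : ℝ} (ht : t < 0) :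
    Real.log ((2 - t + 2 * √(1 - t)) / -t) = 2 * Real.artanh (√(1 - t))⁻¹ := by
  have sq_sqrt : √(1 - t) ^ 2 = 1 - t := Real.sq_sqrt (by linarith)
  obtain ⟨inv_sqrt_pos, inv_sqrt_lt_one⟩ := inv_sqrt_one_sub_mem_Ioo ht
  have ratio : (2 - t + 2 * √(1 - t)) / -t = (1 + (√(1 - t))⁻¹) / (1 - (√(1 - t))⁻¹) := by
    rw [div_eq_div_iff (by linarith) (by linarith)]
    have sqrt_pos := inv_pos.1 inv_sqrt_pos
    field_simp
    linear_combination 2 * sq_sqrt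
  rw [Real.artanh_eq_half_log ⟨by linarith, inv_sqrt_lt_one.le⟩, ratio]
  ring

lemma sqrt_mul_sinh_half_log {t : ℝ} (ht : t < 0) :
    √(1 - t) * Real.sinh (Real.log ((2 - t + 2 * √(1 - t)) / -t) / 2) =
      Real.cosh (Real.log ((2 - t + 2 * √(1 - t)) / -t) / 2) := by
  obtain ⟨inv_sqrt_pos, inv_sqrt_lt_one⟩ := inv_sqrt_one_sub_mem_Ioo ht
  have tanh_eq := Real.tanh_artanh ⟨by linarith, inv_sqrt_lt_one⟩
  rw [Real.tanh_eq_sinh_div_cosh, div_eq_iff (Real.cosh_pos _).ne'] at tanh_eq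
  rw [log_eq_two_mul_artanh_inv_sqrt ht, mul_div_cancel_left₀ _ two_ne_zero, tanh_eq,
    mul_inv_cancel_left₀ (inv_pos.1 inv_sqrt_pos).ne']

lemma iteratedDeriv_logDeriv_cosh_eq_peakPoly {a b t : ℝ} (ha : a ^ 2 = 1 - t)
    (hb : a * Real.sinh (b / 2) = Real.cosh (b / 2)) {n : ℕ} (hn : n ≠ 0) :
    iteratedDeriv n (logDeriv fun z : ℂ ↦ Complex.cosh (a * z - b / 2)) 0 =
      -(t * peakPoly n t : ℝ) := by
  have ha' : (a : ℂ) ^ 2 = 1 - t := by exact_mod_cast ha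
  refine iteratedDeriv_logDeriv_eq_peakPoly
    (fun z ↦ (hasDerivAt_cosh_mul_sub _ _ z).differentiableAt)
    (fun z ↦ ha' ▸ hasDerivAt_deriv_cosh_mul_sub _ _ z)
    (by simpa using cosh_ofReal_ne_zero (b / 2)) ?_ hn
  simp only [deriv_cosh_mul_sub, mul_zero, zero_sub, Complex.sinh_neg, Complex.cosh_neg, mul_neg]
  exact_mod_cast congrArg (fun x : ℝ ↦ -(x : ℂ)) hb

open Filter in
lemma peakPoly_sub_isBigO {t b r : ℝ} (ht : t < 0)
    (hb : √(1 - t) * Real.sinh (b / 2) = Real.cosh (b / 2)) (hr : 0 < r)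
    (hr' : r < ‖coshZero (√(1 - t)) b 1‖) :
    (fun n : ℕ ↦ peakPoly n t - 2 / t * ‖coshZero (√(1 - t)) b 0‖ ^ (-((n : ℤ) + 1)) *
        Real.cos ((n + 1) * Real.arctan (Real.pi / b)) * n.factorial) =O[atTop]
      fun n ↦ r⁻¹ ^ n * (n.factorial : ℝ) := by
  have sqrt_pos : 0 < √(1 - t) := Real.sqrt_pos.2 (by linarith)
  have b_pos : 0 < b := by
    have := pos_of_mul_pos_right (hb ▸ Real.cosh_pos (b / 2)) sqrt_pos.le
    linarith [Real.sinh_pos_iff.1 this]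
  have estimate := (iteratedDeriv_logDeriv_cosh_isBigO sqrt_pos b_pos hr hr').const_mul_left (-t⁻¹)
  refine Complex.isBigO_ofReal_left.1 (estimate.congr' ?_ .rfl)
  filter_upwards [eventually_ne_atTop 0] with n hn
  have ht' : (t : ℂ) ≠ 0 := Complex.ofReal_ne_zero.2 ht.ne
  rw [iteratedDeriv_logDeriv_cosh_eq_peakPoly (Real.sq_sqrt (by linarith)) hb hn]
  push_cast
  field_simp
  ring

end PeakPoly

open Filter PeakPoly in
theorem f_asymptotics_general {t : ℝ} (ht : t < 0) :
    ∃ α : ℝ, 0 < α ∧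
      α < 1 / (√(Real.log ((2 - t + 2 * √(1 - t)) / -t) ^ 2 + Real.pi ^ 2) / (2 * √(1 - t))) ∧
      (fun n : ℕ ↦ peakPoly n t -
          (2 / t * (√(Real.log ((2 - t + 2 * √(1 - t)) / -t) ^ 2 + Real.pi ^ 2) /
              (2 * √(1 - t))) ^ (-((n : ℤ) + 1)) *
            Real.cos ((n + 1) * Real.arctan (Real.pi / Real.log ((2 - t + 2 * √(1 - t)) / -t))) *
            (n.factorial : ℝ)))
        =O[atTop] fun n : ℕ ↦ α ^ n * (n.factorial : ℝ) := by
  set b := Real.log ((2 - t + 2 * √(1 - t)) / -t)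
  have sqrt_pos : 0 < √(1 - t) := Real.sqrt_pos.2 (by linarith)
  have norm_eq : ‖coshZero (√(1 - t)) b 0‖ = √(b ^ 2 + Real.pi ^ 2) / (2 * √(1 - t)) := by
    simp [norm_coshZero sqrt_pos]
  have norm_pos : 0 < ‖coshZero (√(1 - t)) b 0‖ := by
    rw [norm_eq]
    positivity
  obtain ⟨r, norm_lt, lt_norm⟩ : ∃ r, ‖coshZero (√(1 - t)) b 0‖ < r ∧
      r < ‖coshZero (√(1 - t)) b 1‖ :=
    exists_between ((norm_coshZero_lt_norm_coshZero_iff sqrt_pos).2 (by norm_num))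
  have r_pos : 0 < r := norm_pos.trans norm_lt
  rw [← norm_eq]
  exact ⟨r⁻¹, inv_pos.2 r_pos, by rwa [one_div, inv_lt_inv₀ r_pos norm_pos],
    peakPoly_sub_isBigO ht (sqrt_mul_sinh_half_log ht) r_pos lt_norm⟩

open Filter in
/-- There is `α` with `0 < α < 1/ρ` such that
`fₙ = -2 ρ^{-(n+1)} cos((n+1)θ) · n! + O(αⁿ · n!)` as `n → ∞`, where
`ρ = √((log(3+2√2))² + π²)/(2√2)` and `θ = arctan(π / log(3+2√2))`. -/
theorem f_asymptotics :
    ∃ α : ℝ, 0 < α ∧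
      α < 1 / (Real.sqrt (Real.log (3 + 2 * Real.sqrt 2) ^ 2 + Real.pi ^ 2) /
        (2 * Real.sqrt 2)) ∧
      (fun n : ℕ => f n -
          (-2 * (Real.sqrt (Real.log (3 + 2 * Real.sqrt 2) ^ 2 + Real.pi ^ 2) /
              (2 * Real.sqrt 2)) ^ (-((n : ℤ) + 1)) *
            Real.cos ((n + 1) * Real.arctan (Real.pi / Real.log (3 + 2 * Real.sqrt 2))) *
            (n.factorial : ℝ)))
        =O[atTop] fun n : ℕ => α ^ n * (n.factorial : ℝ) := by
  convert f_asymptotics_general (t := -1) (by norm_num) using 8 <;> norm_num [f]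
end
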